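/- Gap-insertion satisfies the non-symmetric operad axioms on set partitions: (i) unit laws: ρ(π; ∅,…,∅) = π for every partition π of [n], and ρ(∅; α) = α for every partition α; (ii) associativity: for every partition π of [n], partitions αᵢ of [kᵢ] (1 ≤ i ≤ n+1), and partitions β₁,…,β_N where N = n + k₁ + ⋯ + k_{n+1} + 1, one has ρ(ρ(π; α₁,…,α_{n+1}); β₁,…,β_N) = ρ(π; γ₁,…,γ_{n+1}), where γᵢ = ρ(αᵢ; the i-th consecutive group of the βⱼ's), the βⱼ's being partitioned into consecutive groups of sizes k₁+1, k₂+1, …, k_{n+1}+1. -/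

import Mathlib

/-!
The point `i + gapShift k i` is the offset at which group `i` starts, in two senses at once: the
blocks of `α i` are shifted by it, and the `i`-th consecutive group of the `β`'s begins at this
index. Associativity then amounts to two facts.

* The offsets add up (`gapShift_add`, `gapShift_group`): shifting first by the `α`'s and then by
  the `β`'s moves every point exactly as far as shifting inside a composed group `γ i` and then by
  the sizes of the preceding groups.
* The groups tile the index set of the `β`'s (`lt_offset_iff`): every
  `j < n + 1 + gapShift k (n + 1)` is `(i + gapShift k i) + t` for some `i ≤ n` and `t ≤ k i`.

Both sides are therefore unions of the same three families of shifted blocks, coming from the `β`'s,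
the `α`'s and `π`. The identity holds for arbitrary families of finite sets.
-/

/-!
Preliminaries: set partitions of `[n] = {1,…,n}` encoded as `Finset (Finset ℕ)`,
the non-crossing condition, and the gap-insertion composite `ρ(π; α₁,…,α_{n+1})`.
Gaps are indexed by `0,…,n` (gap `i` sits between the elements `i` and `i+1`,
gap `0` before `1`, gap `n` after `n`).
-/

/-- `π` is a partition of `[n] = {1,…,n}` into nonempty blocks. -/
def IsPartitionOn (n : ℕ) (π : Finset (Finset ℕ)) : Prop :=
  (∀ B ∈ π, B.Nonempty) ∧ (∀ B ∈ π, ∀ x ∈ B, x ∈ Finset.Icc 1 n) ∧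
    (∀ x ∈ Finset.Icc 1 n, ∃! B, B ∈ π ∧ x ∈ B)

/-- `π` is non-crossing: there are no `a < c < b < d` with `a, b` in one block and
`c, d` in a different block. -/
def IsNoncrossing (π : Finset (Finset ℕ)) : Prop :=
  ∀ B ∈ π, ∀ C ∈ π, B ≠ C →
    ∀ a ∈ B, ∀ b ∈ B, ∀ c ∈ C, ∀ d ∈ C, ¬(a < c ∧ c < b ∧ b < d)

/-- `gapShift k m = k₀ + ⋯ + k_{m-1}`, the total size of the partitions inserted in the
gaps strictly before position `m`. -/
def gapShift (k : ℕ → ℕ) (m : ℕ) : ℕ := ∑ l ∈ Finset.range m, k l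

/-- The gap-insertion composite `ρ(π; α₀,…,α_n)` of a partition `π` of `[n]` with
partitions `α i` of `[k i]` (`0 ≤ i ≤ n`, gaps indexed from `0`):
the blocks of `α i` are shifted upward by `i + k₀ + ⋯ + k_{i-1}`, and in the blocks of `π`
each element `j` is replaced by `j + k₀ + ⋯ + k_{j-1}`. -/
def gapInsert (n : ℕ) (k : ℕ → ℕ) (π : Finset (Finset ℕ))
    (α : ℕ → Finset (Finset ℕ)) : Finset (Finset ℕ) :=
  ((Finset.range (n + 1)).biUnion fun i =>
      (α i).image fun B => B.image fun x => x + i + gapShift k i)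
    ∪ π.image fun B => B.image fun j => j + gapShift k j

theorem gapShift_succ (k : ℕ → ℕ) (m : ℕ) : gapShift k (m + 1) = gapShift k m + k m :=
  Finset.sum_range_succ k m

theorem gapShift_add (K : ℕ → ℕ) (s t : ℕ) :
    gapShift K (s + t) = gapShift K s + gapShift (fun u => K (s + u)) t :=
  Finset.sum_range_add K s t

/-- The sizes of the composed groups before position `m` add up to the sizes of the corresponding
`α`'s plus the sizes of all the `β`'s with index below the start of group `m`. -/
theorem gapShift_group (k K : ℕ → ℕ) (m : ℕ) :
    gapShift (fun i => k i + ∑ t ∈ Finset.range (k i + 1), K (i + gapShift k i + t)) m =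
      gapShift k m + gapShift K (m + gapShift k m) := by
  induction m with
  | zero => simp [gapShift]
  | succ m ih =>
    have h : m + 1 + gapShift k (m + 1) = m + gapShift k m + (k m + 1) := by
      rw [gapShift_succ]; omega
    have hs : ∑ t ∈ Finset.range (k m + 1), K (m + gapShift k m + t) =
        gapShift (fun u => K (m + gapShift k m + u)) (k m + 1) := rfl
    rw [gapShift_succ, ih, h, gapShift_add K (m + gapShift k m), gapShift_succ k, hs]
    omega

/-- The intervals starting at `i + gapShift k i` of length `k i + 1`, for `i < m`, cover exactly
the numbers below `m + gapShift k m`. -/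
theorem lt_offset_iff (k : ℕ → ℕ) (m j : ℕ) :
    j < m + gapShift k m ↔ ∃ i < m, ∃ t < k i + 1, i + gapShift k i + t = j := by
  induction m with
  | zero => simp [gapShift]
  | succ m ih =>
    rw [gapShift_succ]
    constructor
    · intro h
      by_cases hj : j < m + gapShift k m
      · obtain ⟨i, hi, t, ht, e⟩ := ih.1 hj
        exact ⟨i, by omega, t, ht, e⟩
      · exact ⟨m, by omega, j - (m + gapShift k m), by omega, by omega⟩
    · rintro ⟨i, hi, t, ht, e⟩
      rcases Nat.lt_succ_iff_lt_or_eq.1 hi with hi | rfl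
      · have := ih.2 ⟨i, hi, t, ht, e⟩
        omega
      · omega

theorem mem_gapInsert {n : ℕ} {k : ℕ → ℕ} {π : Finset (Finset ℕ)}
    {α : ℕ → Finset (Finset ℕ)} {C : Finset ℕ} :
    C ∈ gapInsert n k π α ↔
      (∃ i < n + 1, ∃ B ∈ α i, B.image (fun x => x + i + gapShift k i) = C) ∨
        ∃ B ∈ π, B.image (fun j => j + gapShift k j) = C := by
  simp [gapInsert]

theorem gapInsert_assoc (n : ℕ) (k : ℕ → ℕ) (π : Finset (Finset ℕ))
    (α : ℕ → Finset (Finset ℕ)) (K : ℕ → ℕ) (β : ℕ → Finset (Finset ℕ)) :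
    gapInsert (n + gapShift k (n + 1)) K (gapInsert n k π α) β =
      gapInsert n
        (fun i => k i + ∑ t ∈ Finset.range (k i + 1), K (i + gapShift k i + t))
        π
        (fun i => gapInsert (k i) (fun t => K (i + gapShift k i + t)) (α i)
          (fun t => β (i + gapShift k i + t))) := by
  have hβ : ∀ (i t : ℕ) (B : Finset ℕ),
      (B.image fun x => x + t + gapShift (fun t => K (i + gapShift k i + t)) t).image
        (fun x => x + i + (gapShift k i + gapShift K (i + gapShift k i))) =
      B.image fun x => x + (i + gapShift k i + t) + gapShift K (i + gapShift k i + t) := by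
    intro i t B
    rw [Finset.image_image]
    congr 1
    funext x
    simp only [Function.comp, gapShift_add K (i + gapShift k i) t]
    omega
  have hα : ∀ (i : ℕ) (B : Finset ℕ),
      (B.image fun x => x + gapShift (fun t => K (i + gapShift k i + t)) x).image
        (fun x => x + i + (gapShift k i + gapShift K (i + gapShift k i))) =
      (B.image fun x => x + i + gapShift k i).image fun x => x + gapShift K x := by
    intro i B
    rw [Finset.image_image, Finset.image_image]
    congr 1
    funext x
    have e : x + i + gapShift k i = i + gapShift k i + x := by omega
    simp only [Function.comp, e, gapShift_add K (i + gapShift k i) x]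
    omega
  have hπ : ∀ B : Finset ℕ,
      (B.image fun j => j + (gapShift k j + gapShift K (j + gapShift k j))) =
      (B.image fun j => j + gapShift k j).image fun x => x + gapShift K x := by
    intro B
    rw [Finset.image_image]
    congr 1
    funext x
    simp only [Function.comp]
    omega
  have hr : n + gapShift k (n + 1) + 1 = n + 1 + gapShift k (n + 1) := by omega
  ext C
  simp only [mem_gapInsert, gapShift_group, hr, lt_offset_iff]
  constructor
  · rintro (⟨_, ⟨i, hi, t, ht, rfl⟩, B, hB, rfl⟩ | ⟨_, ⟨i, hi, B, hB, rfl⟩ | ⟨B, hB, rfl⟩, rfl⟩)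
    · exact .inl ⟨i, hi, _, .inl ⟨t, ht, B, hB, rfl⟩, hβ i t B⟩
    · exact .inl ⟨i, hi, _, .inr ⟨B, hB, rfl⟩, hα i B⟩
    · exact .inr ⟨B, hB, hπ B⟩
  · rintro (⟨i, hi, _, ⟨t, ht, B, hB, rfl⟩ | ⟨B, hB, rfl⟩, rfl⟩ | ⟨B, hB, rfl⟩)
    · exact .inl ⟨_, ⟨i, hi, t, ht, rfl⟩, B, hB, (hβ i t B).symm⟩
    · exact .inr ⟨_, .inl ⟨i, hi, B, hB, rfl⟩, (hα i B).symm⟩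
    · exact .inr ⟨_, .inr ⟨B, hB, rfl⟩, (hπ B).symm⟩

/-- Gap-insertion satisfies the non-symmetric operad axioms on set
partitions: unit laws and associativity.  In the associativity law, `β j` (a partition
of `[K j]`) is substituted into the `j`-th gap of the composite `ρ(π; α₀,…,α_n)`;
grouping the `β`'s into consecutive groups of sizes `k₀ + 1, …, k_n + 1` (group `i`
starting at index `i + gapShift k i`) and composing each `α i` with its group yields
`γ i`, and `ρ(ρ(π; α); β) = ρ(π; γ₀,…,γ_n)`. -/
theorem gapInsert_operad_axioms :
    -- left unit law: inserting empty partitions in every gap returns `π`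
    (∀ (n : ℕ) (π : Finset (Finset ℕ)), IsPartitionOn n π →
      gapInsert n (fun _ => 0) π (fun _ => (∅ : Finset (Finset ℕ))) = π) ∧
    -- right unit law: inserting `α` into the unique gap of the empty partition gives `α`
    (∀ (k : ℕ → ℕ) (α : ℕ → Finset (Finset ℕ)), IsPartitionOn (k 0) (α 0) →
      gapInsert 0 k (∅ : Finset (Finset ℕ)) α = α 0) ∧
    -- associativity
    (∀ (n : ℕ) (k : ℕ → ℕ) (π : Finset (Finset ℕ)) (α : ℕ → Finset (Finset ℕ))
        (K : ℕ → ℕ) (β : ℕ → Finset (Finset ℕ)),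
      IsPartitionOn n π →
      (∀ i ≤ n, IsPartitionOn (k i) (α i)) →
      (∀ j ≤ n + gapShift k (n + 1), IsPartitionOn (K j) (β j)) →
      gapInsert (n + gapShift k (n + 1)) K (gapInsert n k π α) β =
        gapInsert n
          (fun i => k i + ∑ t ∈ Finset.range (k i + 1), K (i + gapShift k i + t))
          π
          (fun i => gapInsert (k i) (fun t => K (i + gapShift k i + t)) (α i)
            (fun t => β (i + gapShift k i + t)))) := by
  refine ⟨fun n π _ => ?_, fun k α _ => ?_, fun n k π α K β _ _ _ => gapInsert_assoc n k π α K β⟩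
  · ext C
    simp [mem_gapInsert, gapShift]
  · ext C
    simp [mem_gapInsert, gapShift]
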